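/- arXiv:2308.07460 — 6 statements merged into one kernel-verified Lean document; each statement's English description precedes it below -/
import Mathlib

section
/- Let N ≥ 1 be an integer, let 0 < s < 1 < p be real numbers, and let R > 0. Then there exists a constant c > 0 (depending only on N, p, s and R) such that for every continuously differentiable function u : ℝ^N → ℝ whose support is contained in the closed ball of radius R centered at the origin, one has ∬_{ℝ^N×ℝ^N} |u(x)−u(y)|^p / ‖x−y‖^{N+ps} dx dy ≤ c ∫_{ℝ^N} ‖∇u(x)‖^p dx. -/
open MeasureTheory Metric

lemma gg_ftc {E : Type*} [NormedAddCommGroup E] [NormedSpace ℝ E]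
    (u : E → ℝ) (hu : ContDiff ℝ 1 u) (x h : E) :
    ‖u (x + h) - u x‖ₑ ≤ ∫⁻ t in Set.Ioc (0:ℝ) 1, ‖fderiv ℝ u (x + t • h)‖ₑ * ‖h‖ₑ := by
  have hcont : Continuous (fun t : ℝ => fderiv ℝ u (x + t • h) h) := by
    have := hu.continuous_fderiv one_ne_zero
    fun_prop
  have hd : ∀ t ∈ Set.uIcc (0:ℝ) 1, HasDerivAt (fun t : ℝ => u (x + t • h))
      (fderiv ℝ u (x + t • h) h) t := by
    intro t _
    have h1 : HasDerivAt (fun t : ℝ => x + t • h) h t := by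
      simpa using ((hasDerivAt_id t).smul_const h).const_add x
    exact ((hu.differentiable one_ne_zero (x + t • h)).hasFDerivAt).comp_hasDerivAt t h1
  have h2 := intervalIntegral.integral_eq_sub_of_hasDerivAt hd (hcont.intervalIntegrable 0 1)
  simp only [one_smul, zero_smul, add_zero] at h2
  rw [← h2, intervalIntegral.integral_of_le zero_le_one]
  refine (enorm_integral_le_lintegral_enorm _).trans ?_
  exact lintegral_mono fun t => ContinuousLinearMap.le_opENorm _ _

lemma gg_jensen (p : ℝ) (hp : 1 < p) (f : ℝ → ENNReal) (hf : Measurable f) :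
    (∫⁻ t in Set.Ioc (0:ℝ) 1, f t) ^ p ≤ ∫⁻ t in Set.Ioc (0:ℝ) 1, f t ^ p := by
  have : IsProbabilityMeasure (volume.restrict (Set.Ioc (0:ℝ) 1)) := ⟨by simp⟩
  have := eLpNorm'_le_eLpNorm'_of_exponent_le (f := f) zero_lt_one hp.le
    (volume.restrict (Set.Ioc (0:ℝ) 1)) hf.aestronglyMeasurable
  simp only [eLpNorm', enorm_eq_self, ENNReal.rpow_one, div_one, one_div] at this
  calc _ ≤ _ := ENNReal.rpow_le_rpow this (by linarith)
    _ = _ := by rw [← ENNReal.rpow_mul, inv_mul_cancel₀ (by linarith), ENNReal.rpow_one]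

lemma gg_claim1 {N : ℕ} (p : ℝ) (hp : 1 < p)
    (u : EuclideanSpace ℝ (Fin N) → ℝ) (hu : ContDiff ℝ 1 u) (h : EuclideanSpace ℝ (Fin N)) :
    ∫⁻ x, ‖u (x + h) - u x‖ₑ ^ p ≤ ‖h‖ₑ ^ p * ∫⁻ x, ‖fderiv ℝ u x‖ₑ ^ p := by
  have hc := hu.continuous_fderiv one_ne_zero
  calc ∫⁻ x, ‖u (x + h) - u x‖ₑ ^ p
      ≤ ∫⁻ x, ∫⁻ t in Set.Ioc (0:ℝ) 1, (‖fderiv ℝ u (x + t • h)‖ₑ * ‖h‖ₑ) ^ p := by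
        refine lintegral_mono fun x => ?_
        refine (ENNReal.rpow_le_rpow (gg_ftc u hu x h) (by linarith)).trans ?_
        apply gg_jensen p hp
        have : Continuous fun t : ℝ => fderiv ℝ u (x + t • h) := by fun_prop
        exact this.enorm.measurable.mul_const _
    _ = ∫⁻ t in Set.Ioc (0:ℝ) 1, ∫⁻ x, (‖fderiv ℝ u (x + t • h)‖ₑ * ‖h‖ₑ) ^ p := by
        apply lintegral_lintegral_swap
        have : Continuous fun q : EuclideanSpace ℝ (Fin N) × ℝ => fderiv ℝ u (q.1 + q.2 • h) := by
          fun_prop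
        exact ((this.enorm.measurable.mul_const _).pow_const p).aemeasurable
    _ = ∫⁻ t in Set.Ioc (0:ℝ) 1, ‖h‖ₑ ^ p * ∫⁻ x, ‖fderiv ℝ u x‖ₑ ^ p := by
        refine lintegral_congr fun t => ?_
        simp_rw [ENNReal.mul_rpow_of_nonneg _ _ (by linarith : 0 ≤ p)]
        rw [lintegral_add_right_eq_self (fun y => ‖fderiv ℝ u y‖ₑ ^ p * ‖h‖ₑ ^ p) (t • h),
          lintegral_mul_const _ (hc.enorm.measurable.pow_const p), mul_comm]
    _ = _ := by simp

lemma gg_claim2 {N : ℕ} (hN : 1 ≤ N) (p : ℝ) (hp : 1 < p) (R : ℝ) (hR : 0 < R)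
    (u : EuclideanSpace ℝ (Fin N) → ℝ) (hu : ContDiff ℝ 1 u)
    (hsupp : Function.support u ⊆ closedBall (0 : EuclideanSpace ℝ (Fin N)) R) :
    ∫⁻ x, ‖u x‖ₑ ^ p ≤ ENNReal.ofReal (3 * R) ^ p * ∫⁻ x, ‖fderiv ℝ u x‖ₑ ^ p := by
  have : Nonempty (Fin N) := ⟨⟨0, hN⟩⟩
  obtain ⟨h, hh⟩ := exists_norm_eq (EuclideanSpace ℝ (Fin N)) (by linarith : 0 ≤ 3 * R)
  have := gg_claim1 p hp u hu h
  rw [← ofReal_norm, hh] at this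
  refine le_trans (lintegral_mono fun x => ?_) this
  by_cases hx : u x = 0
  · simp [hx, ENNReal.zero_rpow_of_pos (by linarith : 0 < p)]
  · have h1 : ‖x‖ ≤ R := by simpa using hsupp hx
    have h2 : u (x + h) = 0 := by
      by_contra h3
      have h4 : ‖x + h‖ ≤ R := by simpa using hsupp h3
      have h5 := norm_sub_le (x + h) x
      rw [add_sub_cancel_left] at h5
      linarith
    simp [h2]

lemma gg_claim3 {N : ℕ} (hN : 1 ≤ N) (p : ℝ) (hp : 1 < p) (R : ℝ) (hR : 0 < R)
    (u : EuclideanSpace ℝ (Fin N) → ℝ) (hu : ContDiff ℝ 1 u)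
    (hsupp : Function.support u ⊆ closedBall (0 : EuclideanSpace ℝ (Fin N)) R)
    (h : EuclideanSpace ℝ (Fin N)) :
    ∫⁻ x, ‖u (x + h) - u x‖ₑ ^ p ≤
      (2 ^ p * ENNReal.ofReal (3 * R) ^ p) * ∫⁻ x, ‖fderiv ℝ u x‖ₑ ^ p := by
  have hm : Measurable fun x => ‖u x‖ₑ ^ p := hu.continuous.enorm.measurable.pow_const p
  calc ∫⁻ x, ‖u (x + h) - u x‖ₑ ^ p
      ≤ ∫⁻ x, (2:ENNReal) ^ (p - 1) * (‖u (x + h)‖ₑ ^ p + ‖u x‖ₑ ^ p) := by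
        refine lintegral_mono fun x => ?_
        refine (ENNReal.rpow_le_rpow (enorm_sub_le (a := u (x + h)) (b := u x)) (by linarith)).trans ?_
        exact ENNReal.rpow_add_le_mul_rpow_add_rpow _ _ hp.le
    _ = (2:ENNReal) ^ (p - 1) * (2 * ∫⁻ x, ‖u x‖ₑ ^ p) := by
        rw [lintegral_const_mul _ (by
          have := hu.continuous
          exact ((by fun_prop : Continuous fun x => u (x + h)).enorm.measurable.pow_const p).add hm),
          lintegral_add_right _ hm, lintegral_add_right_eq_self (fun y => ‖u y‖ₑ ^ p) h, two_mul]
    _ = 2 ^ p * ∫⁻ x, ‖u x‖ₑ ^ p := by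
        rw [← mul_assoc]
        congr 1
        conv_lhs => rw [← ENNReal.rpow_one 2]
        rw [← ENNReal.rpow_mul, one_mul, ← ENNReal.rpow_add _ _ (by simp) (by simp)]
        simp
    _ ≤ _ := by
        rw [mul_assoc]
        gcongr
        exact gg_claim2 hN p hp R hR u hu hsupp

lemma gg_kernel {N : ℕ} (hN : 1 ≤ N) (s p : ℝ) (hs0 : 0 < s) (hs1 : s < 1) (hp : 1 < p) :
    ∫⁻ h : EuclideanSpace ℝ (Fin N),
      ENNReal.ofReal (min (‖h‖ ^ p) 1 * (‖h‖ ^ ((N : ℝ) + p * s))⁻¹) < ⊤ := by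
  have : Nonempty (Fin N) := ⟨⟨0, hN⟩⟩
  have key : Integrable (fun h : EuclideanSpace ℝ (Fin N) =>
      (fun r : ℝ => min (r ^ p) 1 * (r ^ ((N : ℝ) + p * s))⁻¹) ‖h‖) := by
    refine (integrable_fun_norm_addHaar volume (E := EuclideanSpace ℝ (Fin N))
      (f := fun r : ℝ => min (r ^ p) 1 * (r ^ ((N : ℝ) + p * s))⁻¹)).2 ?_
    rw [← Set.Ioc_union_Ioi_eq_Ioi zero_le_one]
    have hpow : ∀ y : ℝ, 0 < y → y ^ (N - 1) = y ^ ((N:ℝ) - 1) := by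
      intro y hy
      rw [← Real.rpow_natCast]
      congr 1
      push_cast [hN]; ring
    have hps : 0 < p * s := by positivity
    have hps1 : p * s < p := by nlinarith
    refine IntegrableOn.union ?_ ?_
    · have h1 : IntegrableOn (fun y : ℝ => y ^ (p - p * s - 1)) (Set.Ioc 0 1) := by
        rw [← intervalIntegrable_iff_integrableOn_Ioc_of_le zero_le_one]
        exact intervalIntegral.intervalIntegrable_rpow' (by linarith)
      refine h1.congr_fun (fun y hy => ?_) measurableSet_Ioc
      have hy0 := hy.1
      simp only [smul_eq_mul, finrank_euclideanSpace, Fintype.card_fin]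
      rw [min_eq_left (Real.rpow_le_one hy0.le hy.2 (by linarith)), hpow y hy0, ← Real.rpow_neg hy0.le,
        ← Real.rpow_add hy0, ← Real.rpow_add hy0]
      congr 1; ring
    · have h1 : IntegrableOn (fun y : ℝ => y ^ (- (p * s) - 1)) (Set.Ioi 1) :=
        integrableOn_Ioi_rpow_of_lt (by linarith) zero_lt_one
      refine h1.congr_fun (fun y hy => ?_) measurableSet_Ioi
      have hy1 : 1 < y := hy
      have hy0 : 0 < y := by linarith
      simp only [smul_eq_mul, finrank_euclideanSpace, Fintype.card_fin]
      rw [min_eq_right (Real.one_le_rpow hy1.le (by linarith)), hpow y hy0, ← Real.rpow_neg hy0.le,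
        one_mul, ← Real.rpow_add hy0]
      congr 1; ring
  exact key.lintegral_lt_top

/-- For `N ≥ 1`, `0 < s < 1 < p`, `R > 0`, there exists `c > 0` such that
the Gagliardo energy of any `C¹` function supported in the closed ball of radius `R`
is bounded by `c` times the `p`-energy of its gradient. -/
theorem gagliardo_le_gradient (N : ℕ) (hN : 1 ≤ N) (s p : ℝ) (hs0 : 0 < s) (hs1 : s < 1)
    (hp : 1 < p) (R : ℝ) (hR : 0 < R) :
    ∃ c : ℝ, 0 < c ∧
      ∀ u : EuclideanSpace ℝ (Fin N) → ℝ, ContDiff ℝ 1 u →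
        Function.support u ⊆ closedBall (0 : EuclideanSpace ℝ (Fin N)) R →
        (∫⁻ z : EuclideanSpace ℝ (Fin N) × EuclideanSpace ℝ (Fin N),
            ENNReal.ofReal (|u z.1 - u z.2| ^ p / ‖z.1 - z.2‖ ^ ((N : ℝ) + p * s)))
          ≤ ENNReal.ofReal (c * ∫ x : EuclideanSpace ℝ (Fin N), ‖fderiv ℝ u x‖ ^ p) := by
  have hp0 : 0 ≤ p := by linarith
  set K := ∫⁻ h : EuclideanSpace ℝ (Fin N),
      ENNReal.ofReal (min (‖h‖ ^ p) 1 * (‖h‖ ^ ((N : ℝ) + p * s))⁻¹) with hK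
  have hKtop : K < ⊤ := gg_kernel hN s p hs0 hs1 hp
  set A : ENNReal := 1 + 2 ^ p * ENNReal.ofReal (3 * R) ^ p with hA
  have hAtop : A ≠ ⊤ := by
    exact ENNReal.add_ne_top.2 ⟨by simp, ENNReal.mul_ne_top
      (ENNReal.rpow_ne_top_of_nonneg hp0 (by simp))
      (ENNReal.rpow_ne_top_of_nonneg hp0 ENNReal.ofReal_ne_top)⟩
  refine ⟨(A * K).toReal + 1, by positivity, fun u hu hsupp => ?_⟩
  have hAK : A * K ≤ ENNReal.ofReal ((A * K).toReal + 1) := by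
    rw [← ENNReal.ofReal_toReal (ENNReal.mul_ne_top hAtop hKtop.ne)]
    apply ENNReal.ofReal_le_ofReal
    rw [ENNReal.ofReal_toReal (ENNReal.mul_ne_top hAtop hKtop.ne)]
    linarith
  have hc := hu.continuous_fderiv one_ne_zero
  have hu' := hu.continuous
  have hcs : HasCompactSupport u := by
    refine HasCompactSupport.of_support_subset_isCompact (isCompact_closedBall 0 R) hsupp
  have hint : Integrable (fun x => ‖fderiv ℝ u x‖ ^ p) := by
    refine Continuous.integrable_of_hasCompactSupport ?_ ?_
    · exact hc.norm.rpow_const (fun _ => Or.inr hp0)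
    · exact (hcs.fderiv (𝕜 := ℝ)).comp_left (g := fun L => ‖L‖ ^ p)
        (by simp [Real.zero_rpow (by linarith : p ≠ 0)])
  have hG : ENNReal.ofReal (∫ x, ‖fderiv ℝ u x‖ ^ p) = ∫⁻ x, ‖fderiv ℝ u x‖ₑ ^ p := by
    rw [ofReal_integral_eq_lintegral_ofReal hint (.of_forall fun x => by positivity)]
    refine lintegral_congr fun x => ?_
    rw [← ENNReal.ofReal_rpow_of_nonneg (norm_nonneg _) hp0, ofReal_norm]
  rw [ENNReal.ofReal_mul (by positivity), hG]
  refine le_trans ?_ (mul_le_mul_left hAK _)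
  have hmeas : Measurable fun z : EuclideanSpace ℝ (Fin N) × EuclideanSpace ℝ (Fin N) =>
      ENNReal.ofReal (|u z.1 - u z.2| ^ p / ‖z.1 - z.2‖ ^ ((N : ℝ) + p * s)) := by
    have := hu'.measurable
    fun_prop
  rw [Measure.volume_eq_prod, lintegral_prod _ hmeas.aemeasurable]
  have hstep : ∀ x, ∫⁻ y, ENNReal.ofReal (|u x - u y| ^ p / ‖x - y‖ ^ ((N : ℝ) + p * s))
      = ∫⁻ h, ‖u (x + h) - u x‖ₑ ^ p * ENNReal.ofReal ((‖h‖ ^ ((N : ℝ) + p * s))⁻¹) := by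
    intro x
    rw [← lintegral_add_left_eq_self _ x]
    refine lintegral_congr fun h => ?_
    rw [div_eq_mul_inv, ENNReal.ofReal_mul (by positivity),
      ← ENNReal.ofReal_rpow_of_nonneg (abs_nonneg _) hp0, abs_sub_comm, ← Real.norm_eq_abs,
      ofReal_norm]
    simp
  simp only [hstep]
  rw [lintegral_lintegral_swap (by
    have := hu'.measurable
    fun_prop)]
  have hmu : ∀ h, Measurable fun x => ‖u (x + h) - u x‖ₑ ^ p := by
    intro h
    have := hu'.measurable
    fun_prop
  set G := ∫⁻ x, ‖fderiv ℝ u x‖ₑ ^ p with hGdef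
  calc _ ≤ ∫⁻ h : EuclideanSpace ℝ (Fin N), (A * G) *
        ENNReal.ofReal (min (‖h‖ ^ p) 1 * (‖h‖ ^ ((N : ℝ) + p * s))⁻¹) := by
        refine lintegral_mono fun h => ?_
        simp only
        rw [lintegral_mul_const _ (hmu h), ENNReal.ofReal_mul (by positivity), ← mul_assoc]
        refine mul_le_mul_left ?_ _
        rcases le_total (‖h‖ ^ p) 1 with hh | hh
        · rw [min_eq_left hh, ← ENNReal.ofReal_rpow_of_nonneg (norm_nonneg _) hp0,
            ofReal_norm]
          refine (gg_claim1 p hp u hu h).trans ?_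
          rw [← hGdef, mul_comm]
          refine mul_le_mul_left ?_ _
          calc G = 1 * G := (one_mul _).symm
            _ ≤ A * G := mul_le_mul_left le_self_add _
        · rw [min_eq_right hh, ENNReal.ofReal_one, mul_one]
          refine (gg_claim3 hN p hp R hR u hu hsupp h).trans ?_
          exact mul_le_mul_left le_add_self _
    _ = A * G * K := by rw [lintegral_const_mul _ (by fun_prop)]
    _ = A * K * G := by ring
    _ ≤ _ := le_rfl
end

section
/- Let p > 1 and κ > 0. For every a, b, c, d ∈ ℝ one has (Φ(a−b) − Φ(c−d)) · (T_κ(a−c) − T_κ(b−d)) ≥ 0, where Φ(t) = |t|^{p−2} t. -/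
lemma phi_nonneg_eq (p : ℝ) (hp : 1 < p) (t : ℝ) (ht : 0 ≤ t) :
    |t| ^ (p - 2) * t = t ^ (p - 1) := by
  rcases ht.eq_or_lt with h | h
  · subst h
    rw [Real.zero_rpow (by linarith : p - 1 ≠ 0), mul_zero]
  · rw [abs_of_pos h, ← Real.rpow_add_one h.ne']
    congr 1
    ring

lemma phi_mono (p : ℝ) (hp : 1 < p) : Monotone (fun t : ℝ => |t| ^ (p - 2) * t) := by
  have key : ∀ s t : ℝ, 0 ≤ s → s ≤ t → |s| ^ (p - 2) * s ≤ |t| ^ (p - 2) * t := by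
    intro s t hs hst
    rw [phi_nonneg_eq p hp s hs, phi_nonneg_eq p hp t (hs.trans hst)]
    exact Real.rpow_le_rpow hs hst (by linarith)
  intro s t hst
  show |s| ^ (p - 2) * s ≤ |t| ^ (p - 2) * t
  rcases le_total 0 s with hs | hs
  · exact key s t hs hst
  · rcases le_total 0 t with ht | ht
    · exact (mul_nonpos_of_nonneg_of_nonpos (by positivity) hs).trans (by positivity)
    · have := key (-t) (-s) (by linarith) (by linarith)
      rw [abs_neg, abs_neg] at this
      linarith

lemma trunc_eq (κ : ℝ) (hκ : 0 < κ) (t : ℝ) :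
    (if |t| ≤ κ then t else κ * t / |t|) = max (-κ) (min κ t) := by
  split_ifs with h
  · rw [abs_le] at h
    rw [min_eq_right h.2, max_eq_right h.1]
  · rcases le_total 0 t with ht | ht
    · rw [abs_of_nonneg ht] at h ⊢
      rw [min_eq_left (by linarith), max_eq_right (by linarith), mul_div_assoc,
        div_self (by linarith), mul_one]
    · rw [abs_of_nonpos ht] at h ⊢
      rw [min_eq_right (by linarith), max_eq_left (by linarith), mul_div_assoc, div_neg,
        div_self (by linarith)]
      ring

lemma trunc_mono (κ : ℝ) (s t : ℝ) (h : s ≤ t) :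
    max (-κ) (min κ s) ≤ max (-κ) (min κ t) :=
  max_le_max le_rfl (min_le_min le_rfl h)

/-- For `p > 1`, `κ > 0` and all reals `a, b, c, d`,
`(Φ(a−b) − Φ(c−d)) · (T_κ(a−c) − T_κ(b−d)) ≥ 0`, where `Φ(t) = |t|^(p−2) t` and
`T_κ` is the truncation at level `κ`. -/
theorem simon_truncation_ineq (p κ : ℝ) (hp : 1 < p) (hκ : 0 < κ) (a b c d : ℝ) :
    0 ≤ (|a - b| ^ (p - 2) * (a - b) - |c - d| ^ (p - 2) * (c - d)) *
        ((if |a - c| ≤ κ then a - c else κ * (a - c) / |a - c|) -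
         (if |b - d| ≤ κ then b - d else κ * (b - d) / |b - d|)) := by
  rw [trunc_eq κ hκ, trunc_eq κ hκ]
  rcases le_total (a - b) (c - d) with h | h
  · exact mul_nonneg_of_nonpos_of_nonpos (sub_nonpos.2 (phi_mono p hp h))
      (sub_nonpos.2 (trunc_mono κ _ _ (by linarith)))
  · exact mul_nonneg (sub_nonneg.2 (phi_mono p hp h))
      (sub_nonneg.2 (trunc_mono κ _ _ (by linarith)))
end

section
/- Let N be an integer and let 1 < p < N, set p* = Np/(N−p), let r > 0, and let q be a real number with q > p*(1 − 1/p). Then there exists a constant C > 0 such that for every ε ∈ (0, 1], ∫_{B_r(0)} U_ε(x)^q dx ≥ C ε^{N − q(N−p)/p}, where B_r(0) is the ball of radius r centered at the origin. -/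
open MeasureTheory Metric

/-- The Aubin–Talenti bubble `U_ε`. -/
noncomputable def bubble (N : ℕ) (p ε : ℝ) (x : EuclideanSpace ℝ (Fin N)) : ℝ :=
  ((N : ℝ) * (((N : ℝ) - p) / (p - 1)) ^ (p - 1)) ^ (((N : ℝ) - p) / p ^ 2) *
    ε ^ (((N : ℝ) - p) / (p * (p - 1))) *
    (ε ^ (p / (p - 1)) + ‖x‖ ^ (p / (p - 1))) ^ (-(((N : ℝ) - p) / p))

/-- lower bound `∫_{B_r(0)} U_ε^q ≥ C ε^{N − q(N−p)/p}` for
`q > p*(1 − 1/p)`, uniformly for `ε ∈ (0,1]`. -/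
theorem bubble_Lq_lower_bound (N : ℕ) (p : ℝ) (hp : 1 < p) (hpN : p < N)
    (r q : ℝ) (hr : 0 < r)
    (hq : ((N : ℝ) * p / ((N : ℝ) - p)) * (1 - 1 / p) < q) :
    ∃ C : ℝ, 0 < C ∧ ∀ ε ∈ Set.Ioc (0 : ℝ) 1,
      C * ε ^ ((N : ℝ) - q * ((N : ℝ) - p) / p) ≤
        ∫ x in ball (0 : EuclideanSpace ℝ (Fin N)) r, (bubble N p ε x) ^ q := by
  have hp0 : 0 < p := by linarith
  have hp1 : 0 < p - 1 := by linarith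
  have hNp : 0 < (N : ℝ) - p := by linarith
  have hN : 0 < (N : ℝ) := by linarith
  have hN' : 0 < N := by exact_mod_cast hN
  have : Nonempty (Fin N) := ⟨⟨0, hN'⟩⟩
  have hq0 : 0 < q := by
    refine lt_of_le_of_lt ?_ hq
    have : 1 / p ≤ 1 := by rw [div_le_one hp0]; exact hp.le
    have h2 : 0 ≤ 1 - 1 / p := by linarith
    positivity
  set K : ℝ := ((N : ℝ) * (((N : ℝ) - p) / (p - 1)) ^ (p - 1)) ^ (((N : ℝ) - p) / p ^ 2) with hK
  have hK0 : 0 < K := by positivity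
  set a : ℝ := ((N : ℝ) - p) / p with ha
  have ha0 : 0 < a := by positivity
  set b : ℝ := p / (p - 1) with hb
  have hb0 : 0 < b := by positivity
  set s : ℝ := min r 1 with hs
  have hs0 : 0 < s := lt_min hr one_pos
  have hV : 0 < volume.real (ball (0 : EuclideanSpace ℝ (Fin N)) s) :=
    ENNReal.toReal_pos (measure_ball_pos _ _ hs0).ne' measure_ball_lt_top.ne
  refine ⟨(K * 2 ^ (-a)) ^ q * volume.real (ball (0 : EuclideanSpace ℝ (Fin N)) s),
    by positivity, ?_⟩
  rintro ε ⟨hε, hε1⟩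
  have hpos : ∀ x : EuclideanSpace ℝ (Fin N), 0 < bubble N p ε x := by
    intro x
    unfold bubble
    positivity
  have hcont : Continuous (fun x : EuclideanSpace ℝ (Fin N) => (bubble N p ε x) ^ q) := by
    refine Continuous.rpow_const ?_ (fun x => Or.inl (hpos x).ne')
    unfold bubble
    refine continuous_const.mul (Continuous.rpow_const ?_ (fun x => Or.inl ?_))
    · exact continuous_const.add (continuous_norm.rpow_const (fun x => Or.inr hb0.le))
    · positivity
  have hint : ∀ R : ℝ, IntegrableOn (fun x : EuclideanSpace ℝ (Fin N) => (bubble N p ε x) ^ q)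
      (ball 0 R) := fun R =>
    (hcont.continuousOn.integrableOn_compact (isCompact_closedBall 0 R)).mono_set
      ball_subset_closedBall
  have hsub : ball (0 : EuclideanSpace ℝ (Fin N)) (ε * s) ⊆ ball 0 r := by
    apply ball_subset_ball
    calc ε * s ≤ 1 * s := by gcongr
      _ ≤ r := by rw [one_mul]; exact min_le_left _ _
  have hvol : volume.real (ball (0 : EuclideanSpace ℝ (Fin N)) (ε * s))
      = ε ^ (N : ℝ) * volume.real (ball (0 : EuclideanSpace ℝ (Fin N)) s) := by
    rw [measureReal_def, Measure.addHaar_ball_mul_of_pos _ _ hε, ENNReal.toReal_mul,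
      ENNReal.toReal_ofReal (by positivity), finrank_euclideanSpace_fin, Real.rpow_natCast,
      measureReal_def]
  have hlow : ∀ x ∈ ball (0 : EuclideanSpace ℝ (Fin N)) (ε * s),
      (K * 2 ^ (-a)) ^ q * ε ^ (-(a * q)) ≤ (bubble N p ε x) ^ q := by
    intro x hx
    have hxn : ‖x‖ ≤ ε := by
      have h1 : ‖x‖ < ε * s := by simpa using hx
      have h2 : ε * s ≤ ε * 1 := by gcongr; exact min_le_right _ _
      linarith
    have hxb : ‖x‖ ^ b ≤ ε ^ b := Real.rpow_le_rpow (norm_nonneg _) hxn hb0.le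
    have hεb : 0 < ε ^ b := by positivity
    have hsum : (2 * ε ^ b) ^ (-a) ≤ (ε ^ b + ‖x‖ ^ b) ^ (-a) :=
      Real.rpow_le_rpow_of_nonpos (by positivity) (by linarith) (by linarith)
    have hexp : ε ^ (((N : ℝ) - p) / (p * (p - 1))) * (2 * ε ^ b) ^ (-a)
        = 2 ^ (-a) * ε ^ (-a) := by
      rw [Real.mul_rpow (by norm_num) hεb.le, ← Real.rpow_mul hε.le, mul_left_comm,
        ← Real.rpow_add hε]
      congr 2
      rw [ha, hb]
      field_simp
      ring
    have hmain : K * 2 ^ (-a) * ε ^ (-a) ≤ bubble N p ε x := by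
      rw [mul_assoc, ← hexp, ← mul_assoc]
      unfold bubble
      gcongr
    calc (K * 2 ^ (-a)) ^ q * ε ^ (-(a * q)) = (K * 2 ^ (-a) * ε ^ (-a)) ^ q := by
          rw [Real.mul_rpow (x := K * 2 ^ (-a)) (y := ε ^ (-a)) (by positivity) (by positivity),
            ← Real.rpow_mul hε.le, neg_mul]
      _ ≤ _ := Real.rpow_le_rpow (by positivity) hmain hq0.le
  calc _ = (K * 2 ^ (-a)) ^ q * ε ^ (-(a * q))
        * volume.real (ball (0 : EuclideanSpace ℝ (Fin N)) (ε * s)) := by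
        have he : (N : ℝ) - q * ((N : ℝ) - p) / p = -(a * q) + N := by rw [ha]; ring
        rw [hvol, he, Real.rpow_add hε]
        ring
    _ ≤ ∫ x in ball (0 : EuclideanSpace ℝ (Fin N)) (ε * s), (bubble N p ε x) ^ q :=
        setIntegral_ge_of_const_le_real measurableSet_ball measure_ball_lt_top.ne hlow (hint _)
    _ ≤ _ := setIntegral_mono_set (hint r)
        (Filter.Eventually.of_forall fun x => Real.rpow_nonneg (hpos x).le q)
        hsub.eventuallyLE
end

section
/- Let N be an integer, 1 < p < N, and ρ > 0. Then there exists a constant C > 0 (depending only on N, p and ρ) such that for every ε > 0 the function U_ε is differentiable at every x ∈ ℝ^N with ‖x‖ ≥ ρ, and ‖∇U_ε(x)‖ ≤ C ε^{(N−p)/(p(p−1))} for all such x. -/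
/-- there exists `C > 0` depending only on `N, p, ρ` such that for every
`ε > 0`, `U_ε` is differentiable at each `x` with `‖x‖ ≥ ρ` and
`‖∇U_ε(x)‖ ≤ C ε^{(N−p)/(p(p−1))}` there. -/
theorem bubble_gradient_bound (N : ℕ) (p : ℝ) (hp : 1 < p) (hpN : p < N)
    (ρ : ℝ) (hρ : 0 < ρ) :
    ∃ C : ℝ, 0 < C ∧ ∀ ε : ℝ, 0 < ε → ∀ x : EuclideanSpace ℝ (Fin N), ρ ≤ ‖x‖ →
      DifferentiableAt ℝ (bubble N p ε) x ∧
        ‖fderiv ℝ (bubble N p ε) x‖ ≤ C * ε ^ (((N : ℝ) - p) / (p * (p - 1))) := by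
  have hp1 : 0 < p - 1 := by linarith
  have hp0 : 0 < p := by linarith
  have hNp : 0 < (N : ℝ) - p := by linarith
  have hN : 0 < (N : ℝ) := by linarith
  unfold bubble
  set K : ℝ := ((N : ℝ) * (((N : ℝ) - p) / (p - 1)) ^ (p - 1)) ^ (((N : ℝ) - p) / p ^ 2) with hK
  have hKpos : 0 < K := by rw [hK]; positivity
  set b : ℝ := ((N : ℝ) - p) / (p * (p - 1))
  set q : ℝ := p / (p - 1) with hq
  have hqpos : 0 < q := by rw [hq]; positivity
  set a : ℝ := ((N : ℝ) - p) / p with ha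
  have hapos : 0 < a := by rw [ha]; positivity
  refine ⟨K * (a * q * ρ ^ (-(q * a) - 1)), by positivity, ?_⟩
  intro ε hε x hx
  have hr : 0 < ‖x‖ := lt_of_lt_of_le hρ hx
  have hx0 : x ≠ 0 := norm_pos_iff.mp hr
  have hE : 0 < ε ^ q := by positivity
  have hrq : 0 < ‖x‖ ^ q := by positivity
  have hnd : DifferentiableAt ℝ (fun y : EuclideanSpace ℝ (Fin N) => ‖y‖) x :=
    (contDiffAt_norm ℝ hx0 (n := 1)).differentiableAt (by norm_num)
  have hg : HasDerivAt (fun r : ℝ => K * ε ^ b * (ε ^ q + r ^ q) ^ (-a))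
      (K * ε ^ b * ((q * ‖x‖ ^ (q - 1)) * (-a) * (ε ^ q + ‖x‖ ^ q) ^ (-a - 1))) ‖x‖ :=
    ((((Real.hasDerivAt_rpow_const (Or.inl hr.ne')).const_add (ε ^ q)).rpow_const
      (Or.inl (by positivity))).const_mul (K * ε ^ b))
  have hF := hg.comp_hasFDerivAt x hnd.hasFDerivAt
  have hF' : HasFDerivAt (fun y : EuclideanSpace ℝ (Fin N) =>
      K * ε ^ b * (ε ^ q + ‖y‖ ^ q) ^ (-a)) _ x := hF
  refine ⟨hF'.differentiableAt, ?_⟩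
  have hfd := hF'.fderiv
  change ‖fderiv ℝ (fun y : EuclideanSpace ℝ (Fin N) =>
      K * ε ^ b * (ε ^ q + ‖y‖ ^ q) ^ (-a)) x‖ ≤ _
  rw [hfd, norm_smul]
  have h1 : ‖fderiv ℝ (fun y : EuclideanSpace ℝ (Fin N) => ‖y‖) x‖ ≤ 1 := by
    simpa using norm_fderiv_le_of_lipschitz ℝ
      (lipschitzWith_one_norm (E := EuclideanSpace ℝ (Fin N))) (x₀ := x)
  have h2 : (ε ^ q + ‖x‖ ^ q) ^ (-a - 1) ≤ (‖x‖ ^ q) ^ (-a - 1) :=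
    Real.rpow_le_rpow_of_nonpos hrq (by linarith) (by linarith)
  have h3 : ‖x‖ ^ (q - 1) * (‖x‖ ^ q) ^ (-a - 1) = ‖x‖ ^ (-(q * a) - 1) := by
    rw [← Real.rpow_mul hr.le, ← Real.rpow_add hr]
    congr 1
    ring
  have h4 : ‖x‖ ^ (-(q * a) - 1) ≤ ρ ^ (-(q * a) - 1) :=
    Real.rpow_le_rpow_of_nonpos hρ hx (by nlinarith [mul_pos hqpos hapos])
  have h5 : ‖x‖ ^ (q - 1) * (ε ^ q + ‖x‖ ^ q) ^ (-a - 1) ≤ ρ ^ (-(q * a) - 1) := by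
    refine le_trans ?_ h4
    rw [← h3]
    gcongr
  have h6 : ‖K * ε ^ b * ((q * ‖x‖ ^ (q - 1)) * (-a) * (ε ^ q + ‖x‖ ^ q) ^ (-a - 1))‖
      = K * ε ^ b * (a * q) * (‖x‖ ^ (q - 1) * (ε ^ q + ‖x‖ ^ q) ^ (-a - 1)) := by
    rw [show K * ε ^ b * ((q * ‖x‖ ^ (q - 1)) * (-a) * (ε ^ q + ‖x‖ ^ q) ^ (-a - 1))
      = -(K * ε ^ b * (a * q) * (‖x‖ ^ (q - 1) * (ε ^ q + ‖x‖ ^ q) ^ (-a - 1))) by ring,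
      norm_neg, Real.norm_of_nonneg (by positivity)]
  rw [h6]
  calc _ ≤ K * ε ^ b * (a * q) * ρ ^ (-(q * a) - 1) * 1 := by gcongr
    _ = _ := by ring
end

section
/- Let N be an integer, 1 < p < N, let r > 0 and let φ be a cutoff of radius r; set u_ε = φ · U_ε. Then there exists a constant C > 0 (depending only on N, p, r and φ) such that for every ε > 0, every x ∈ ℝ^N, and every y ∈ ℝ^N with ‖y‖ ≥ r and ‖x−y‖ ≤ r/2, one has |u_ε(x) − u_ε(y)| ≤ C ε^{(N−p)/(p(p−1))} ‖x−y‖. -/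
open Metric

lemma radial_lip (e a b s : ℝ) (he : 0 < e) (ha : 0 < a) (hb : 0 < b) (hs : 0 < s)
    (u v : ℝ) (hu : s ≤ u) (hv : s ≤ v) :
    |(e + u ^ a) ^ (-b) - (e + v ^ a) ^ (-b)| ≤ (a * b * s ^ (-(a * b) - 1)) * |u - v| := by
  have key := Convex.norm_image_sub_le_of_norm_hasDerivWithin_le (𝕜 := ℝ)
    (f := fun t : ℝ => (e + t ^ a) ^ (-b))
    (f' := fun t : ℝ => (a * t ^ (a - 1)) * (-b) * (e + t ^ a) ^ (-b - 1))
    (s := Set.Ici s) (C := a * b * s ^ (-(a * b) - 1)) (x := v) (y := u) ?_ ?_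
    (convex_Ici s) hv hu
  · simpa [Real.norm_eq_abs] using key
  · intro t ht
    have ht0 : 0 < t := lt_of_lt_of_le hs ht
    have hta : 0 < t ^ a := Real.rpow_pos_of_pos ht0 a
    have h1 : HasDerivAt (fun t : ℝ => e + t ^ a) (a * t ^ (a - 1)) t :=
      (Real.hasDerivAt_rpow_const (Or.inl ht0.ne')).const_add e
    exact (h1.rpow_const (p := -b) (Or.inl (by positivity))).hasDerivWithinAt
  · intro t ht
    have ht' : s ≤ t := ht
    have ht0 : 0 < t := lt_of_lt_of_le hs ht
    have hta : 0 < t ^ a := Real.rpow_pos_of_pos ht0 a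
    have h2 : (e + t ^ a) ^ (-b - 1) ≤ (t ^ a) ^ (-b - 1) :=
      Real.rpow_le_rpow_of_nonpos hta (by linarith) (by linarith)
    have h3 : t ^ (-(a * b) - 1) ≤ s ^ (-(a * b) - 1) :=
      Real.rpow_le_rpow_of_nonpos hs ht' (by nlinarith [mul_pos ha hb])
    have h4 : t ^ (a - 1) * (t ^ a) ^ (-b - 1) = t ^ (-(a * b) - 1) := by
      rw [← Real.rpow_mul ht0.le, ← Real.rpow_add ht0]
      congr 1; ring
    have h5 : 0 < t ^ (a - 1) := Real.rpow_pos_of_pos ht0 _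
    have h6 : 0 < (e + t ^ a) ^ (-b - 1) := Real.rpow_pos_of_pos (by positivity) _
    rw [Real.norm_eq_abs, show a * t ^ (a - 1) * -b * (e + t ^ a) ^ (-b - 1)
      = -(a * b * (t ^ (a - 1) * (e + t ^ a) ^ (-b - 1))) by ring, abs_neg,
      abs_of_pos (by positivity)]
    have h7 : t ^ (a - 1) * (e + t ^ a) ^ (-b - 1) ≤ s ^ (-(a * b) - 1) :=
      (mul_le_mul_of_nonneg_left h2 h5.le).trans (h4.le.trans h3)
    gcongr

/-- Lipschitz‐type estimate for `u_ε = φ U_ε` away from the origin: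
`|u_ε(x) − u_ε(y)| ≤ C ε^{(N−p)/(p(p−1))} ‖x−y‖` whenever `‖y‖ ≥ r`, `‖x−y‖ ≤ r/2`. -/
theorem truncated_bubble_lipschitz (N : ℕ) (p : ℝ) (hp : 1 < p) (hpN : p < N)
    (r : ℝ) (hr : 0 < r) (φ : EuclideanSpace ℝ (Fin N) → ℝ) (hφ : ContDiff ℝ 1 φ)
    (hφ01 : ∀ x, 0 ≤ φ x ∧ φ x ≤ 1)
    (hφ1 : ∀ x ∈ closedBall (0 : EuclideanSpace ℝ (Fin N)) r, φ x = 1)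
    (hφ0 : ∀ x ∉ ball (0 : EuclideanSpace ℝ (Fin N)) (2 * r), φ x = 0) :
    ∃ C : ℝ, 0 < C ∧ ∀ ε : ℝ, 0 < ε → ∀ x y : EuclideanSpace ℝ (Fin N),
      r ≤ ‖y‖ → ‖x - y‖ ≤ r / 2 →
      |φ x * bubble N p ε x - φ y * bubble N p ε y| ≤
        C * ε ^ (((N : ℝ) - p) / (p * (p - 1))) * ‖x - y‖ := by
  have hcs : HasCompactSupport φ := by
    refine HasCompactSupport.intro (isCompact_closedBall (0 : EuclideanSpace ℝ (Fin N)) (2 * r)) ?_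
    intro x hx
    exact hφ0 x (fun h => hx (ball_subset_closedBall h))
  obtain ⟨L, hL⟩ := hφ.lipschitzWith_of_hasCompactSupport hcs one_ne_zero
  have ha : 0 < p / (p - 1) := div_pos (by linarith) (by linarith)
  have hb : 0 < ((N : ℝ) - p) / p := div_pos (by linarith) (by linarith)
  have hs : 0 < r / 2 := by linarith
  have hK : 0 ≤ ((N : ℝ) * (((N : ℝ) - p) / (p - 1)) ^ (p - 1)) ^ (((N : ℝ) - p) / p ^ 2) := by
    have : 0 ≤ ((N : ℝ) - p) / (p - 1) := div_nonneg (by linarith) (by linarith)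
    positivity
  unfold bubble
  generalize ((N : ℝ) * (((N : ℝ) - p) / (p - 1)) ^ (p - 1)) ^ (((N : ℝ) - p) / p ^ 2) = K at hK ⊢
  generalize ((N : ℝ) - p) / (p * (p - 1)) = c
  generalize p / (p - 1) = a at ha ⊢
  generalize ((N : ℝ) - p) / p = b at hb ⊢
  have hM : 0 < (r / 2) ^ (a * -b) := Real.rpow_pos_of_pos hs _
  have hD : 0 < a * b * (r / 2) ^ (-(a * b) - 1) := by positivity
  refine ⟨K * (L * (r / 2) ^ (a * -b) + a * b * (r / 2) ^ (-(a * b) - 1)) + 1, by positivity, ?_⟩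
  intro ε hε x y hy hxy
  have hx : r / 2 ≤ ‖x‖ := by
    have := norm_sub_norm_le y x
    rw [norm_sub_rev] at this
    linarith
  have hE : 0 < ε ^ c := Real.rpow_pos_of_pos hε _
  have he : 0 < ε ^ a := Real.rpow_pos_of_pos hε _
  have hlip := radial_lip (ε ^ a) a b (r / 2) he ha hb hs ‖x‖ ‖y‖ hx (by linarith)
  have hn : |‖x‖ - ‖y‖| ≤ ‖x - y‖ := abs_norm_sub_norm_le x y
  have hlip2 := hlip.trans (mul_le_mul_of_nonneg_left hn hD.le)
  have hbd : (ε ^ a + ‖x‖ ^ a) ^ (-b) ≤ (r / 2) ^ (a * -b) := by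
    rw [Real.rpow_mul hs.le]
    have h1 : (r / 2) ^ a ≤ ‖x‖ ^ a := Real.rpow_le_rpow hs.le hx ha.le
    exact Real.rpow_le_rpow_of_nonpos (by positivity) (by linarith) (by linarith)
  have hpos : 0 ≤ (ε ^ a + ‖x‖ ^ a) ^ (-b) := by positivity
  have hφL : |φ x - φ y| ≤ L * ‖x - y‖ := by
    simpa [Real.dist_eq, dist_eq_norm] using hL.dist_le_mul x y
  generalize (ε ^ a + ‖x‖ ^ a) ^ (-b) = g at *
  generalize (ε ^ a + ‖y‖ ^ a) ^ (-b) = h at *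
  generalize (r / 2) ^ (a * -b) = M at *
  generalize a * b * (r / 2) ^ (-(a * b) - 1) = D at *
  generalize ε ^ c = E at *
  have hd := norm_nonneg (x - y)
  generalize ‖x - y‖ = d at *
  have hmain : |φ x * g - φ y * h| ≤ (L * M + D) * d := by
    have h1 : φ x * g - φ y * h = (φ x - φ y) * g + φ y * (g - h) := by ring
    rw [h1]
    refine (abs_add_le _ _).trans ?_
    rw [abs_mul, abs_mul, abs_of_nonneg hpos, abs_of_nonneg (hφ01 y).1]
    have h2 : |φ x - φ y| * g ≤ (L * d) * M := mul_le_mul hφL hbd hpos (by positivity)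
    have h3 : φ y * |g - h| ≤ 1 * (D * d) :=
      mul_le_mul (hφ01 y).2 hlip2 (abs_nonneg _) zero_le_one
    linarith
  rw [show φ x * (K * E * g) - φ y * (K * E * h) = K * E * (φ x * g - φ y * h) by ring, abs_mul,
    abs_of_nonneg (by positivity : 0 ≤ K * E)]
  have h4 := mul_le_mul_of_nonneg_left hmain (by positivity : 0 ≤ K * E)
  have h5 : 0 ≤ E * d := by positivity
  linarith
end

section
/- Let N be an integer with 1 < p < N and set p* = Np/(N−p). Then the function U_1 is continuously differentiable on ℝ^N, ∫_{ℝ^N} U_1(x)^{p*} dx < ∞, and ∫_{ℝ^N} ‖∇U_1(x)‖^p dx < ∞; that is, the Aubin–Talenti bubble belongs to D^{1,p}(ℝ^N) ∩ L^{p*}(ℝ^N). -/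
open MeasureTheory

/-- The Aubin–Talenti bubble `U_1`. -/
noncomputable def bubbleOne (N : ℕ) (p : ℝ) (x : EuclideanSpace ℝ (Fin N)) : ℝ :=
  ((N : ℝ) * (((N : ℝ) - p) / (p - 1)) ^ (p - 1)) ^ (((N : ℝ) - p) / p ^ 2) *
    (1 + ‖x‖ ^ (p / (p - 1))) ^ (-(((N : ℝ) - p) / p))

theorem bubble_lintegral_aux (N : ℕ) (q s C : ℝ) (hq : 1 < q) (hs : 0 < s) (h : (N : ℝ) < q * s)
    (hC : 0 ≤ C) :
    (∫⁻ x : EuclideanSpace ℝ (Fin N), ENNReal.ofReal (C * (1 + ‖x‖ ^ q) ^ (-s))) < ⊤ := by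
  have hI : Integrable (fun x : EuclideanSpace ℝ (Fin N) =>
      (C * ((2 : ℝ) ^ (q - 1)) ^ s) * (1 + ‖x‖) ^ (-(q * s))) :=
    (integrable_one_add_norm (by simpa using h)).const_mul _
  refine lt_of_le_of_lt (lintegral_mono fun x => ENNReal.ofReal_le_ofReal ?_) hI.lintegral_lt_top
  have h0 : 0 ≤ ‖x‖ := norm_nonneg x
  have h2 : (1 + ‖x‖) ^ q ≤ (2 : ℝ) ^ (q - 1) * (1 + ‖x‖ ^ q) := by
    have := NNReal.rpow_add_le_mul_rpow_add_rpow 1 ‖x‖₊ (p := q) hq.le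
    rw [← NNReal.coe_le_coe] at this
    push_cast at this
    simpa using this
  have hA : 0 < (1 + ‖x‖) ^ q := by positivity
  have hB : 0 < 1 + ‖x‖ ^ q := by positivity
  have h3 : ((1 + ‖x‖) ^ q) ^ s ≤ ((2 : ℝ) ^ (q - 1)) ^ s * (1 + ‖x‖ ^ q) ^ s := by
    rw [← Real.mul_rpow (by positivity) hB.le]
    exact Real.rpow_le_rpow hA.le h2 hs.le
  rw [mul_assoc, Real.rpow_neg (by positivity), Real.rpow_neg (by positivity),
    Real.rpow_mul (by positivity)]
  refine mul_le_mul_of_nonneg_left ?_ hC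
  rw [← div_eq_mul_inv, inv_eq_one_div, div_le_div_iff₀ (by positivity) (by positivity)]
  linarith

/-- `U_1` is `C¹`, `∫ U_1^{p*} < ∞` and `∫ ‖∇U_1‖^p < ∞`, i.e. the
Aubin–Talenti bubble belongs to `D^{1,p}(ℝ^N) ∩ L^{p*}(ℝ^N)`. -/
theorem bubble_in_D1p_Lpstar (N : ℕ) (p : ℝ) (hp : 1 < p) (hpN : p < N) :
    ContDiff ℝ 1 (bubbleOne N p) ∧
      (∫⁻ x : EuclideanSpace ℝ (Fin N),
          ENNReal.ofReal ((bubbleOne N p x) ^ ((N : ℝ) * p / ((N : ℝ) - p)))) < ⊤ ∧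
      (∫⁻ x : EuclideanSpace ℝ (Fin N),
          ENNReal.ofReal (‖fderiv ℝ (bubbleOne N p) x‖ ^ p)) < ⊤ := by
  have hp1 : 0 < p - 1 := by linarith
  have hp0 : 0 < p := by linarith
  have hNp : 0 < (N : ℝ) - p := by linarith
  have hN : 0 < (N : ℝ) := by linarith
  obtain ⟨q, hqd⟩ : ∃ q, q = p / (p - 1) := ⟨_, rfl⟩
  obtain ⟨a, had⟩ : ∃ a, a = ((N : ℝ) - p) / p := ⟨_, rfl⟩
  obtain ⟨K, hKd⟩ : ∃ K, K = ((N : ℝ) * (((N : ℝ) - p) / (p - 1)) ^ (p - 1)) ^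
    (((N : ℝ) - p) / p ^ 2) := ⟨_, rfl⟩
  have hK : 0 ≤ K := by rw [hKd]; positivity
  have ha : 0 < a := by rw [had]; positivity
  have hq : 1 < q := by rw [hqd, lt_div_iff₀ hp1]; linarith
  have hU : bubbleOne N p = fun x => K * (1 + ‖x‖ ^ q) ^ (-a) := by
    funext x; rw [hKd, hqd, had]; rfl
  have hpos : ∀ x : EuclideanSpace ℝ (Fin N), 0 < 1 + ‖x‖ ^ q := fun x => by positivity
  rw [hU]
  refine ⟨?_, ?_, ?_⟩
  · refine contDiff_const.mul ?_
    exact (contDiff_const.add (contDiff_norm_rpow hq)).rpow_const_of_ne fun x => (hpos x).ne'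
  · have := bubble_lintegral_aux N q N (K ^ ((N : ℝ) * p / ((N : ℝ) - p))) hq hN
      (by nlinarith) (by positivity)
    refine lt_of_le_of_lt (le_of_eq ?_) this
    refine lintegral_congr fun x => ?_
    rw [Real.mul_rpow hK (Real.rpow_nonneg (hpos x).le _), ← Real.rpow_mul (hpos x).le]
    congr 3
    rw [had]; field_simp
  · have := bubble_lintegral_aux N q (N - 1) ((K * a * q) ^ p) hq (by linarith)
      (by rw [hqd, div_mul_eq_mul_div, lt_div_iff₀ hp1]; nlinarith) (by positivity)
    refine lt_of_le_of_lt (lintegral_mono fun x => ENNReal.ofReal_le_ofReal ?_) this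
    have h0 : 0 ≤ ‖x‖ := norm_nonneg x
    have hB := hpos x
    have hd : DifferentiableAt ℝ (fun x : EuclideanSpace ℝ (Fin N) => ‖x‖ ^ q) x :=
      differentiable_norm_rpow hq x
    have hd2 : HasFDerivAt (fun x : EuclideanSpace ℝ (Fin N) => K * (1 + ‖x‖ ^ q) ^ (-a))
        (K • ((-a * (1 + ‖x‖ ^ q) ^ (-a - 1)) •
          fderiv ℝ (fun x : EuclideanSpace ℝ (Fin N) => ‖x‖ ^ q) x)) x :=
      ((hd.hasFDerivAt.const_add 1).rpow_const (Or.inl hB.ne')).const_mul K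
    have hn : ‖fderiv ℝ (fun x : EuclideanSpace ℝ (Fin N) => ‖x‖ ^ q) x‖ ≤ q * ‖x‖ ^ (q - 1) := by
      have := norm_fderiv_norm_rpow_le (f := fun x : EuclideanSpace ℝ (Fin N) => x)
        differentiable_id (x := x) hq
      refine this.trans ?_
      have h1 : ‖fderiv ℝ (fun x : EuclideanSpace ℝ (Fin N) => x) x‖ ≤ 1 := by
        rw [fderiv_fun_id]; exact ContinuousLinearMap.norm_id_le
      exact mul_le_of_le_one_right (by positivity) h1
    have hr : ‖x‖ ^ (q - 1) ≤ (1 + ‖x‖ ^ q) ^ (1 / p) := by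
      have : q - 1 = q * (1 / p) := by rw [hqd]; field_simp; ring
      rw [this, Real.rpow_mul h0]
      exact Real.rpow_le_rpow (by positivity) (by linarith) (by positivity)
    have hm : ‖fderiv ℝ (fun x : EuclideanSpace ℝ (Fin N) => K * (1 + ‖x‖ ^ q) ^ (-a)) x‖ ≤
        (K * a * q) * (1 + ‖x‖ ^ q) ^ (-((N - 1) / p) : ℝ) := by
      rw [hd2.fderiv, norm_smul, norm_smul, norm_mul, norm_neg, Real.norm_of_nonneg hK,
        Real.norm_of_nonneg ha.le, Real.norm_of_nonneg (Real.rpow_nonneg hB.le _)]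
      have : (-((N - 1) / p) : ℝ) = (-a - 1) + 1 / p := by rw [had]; field_simp; ring
      rw [this, Real.rpow_add hB]
      calc _ ≤ K * (a * (1 + ‖x‖ ^ q) ^ (-a - 1) * (q * (1 + ‖x‖ ^ q) ^ (1 / p))) := by
            gcongr
            exact hn.trans (by gcongr)
        _ = _ := by ring
    refine (Real.rpow_le_rpow (norm_nonneg _) hm hp0.le).trans (le_of_eq ?_)
    rw [Real.mul_rpow (by positivity) (by positivity), ← Real.rpow_mul hB.le]
    congr 2
    field_simp
end
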